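/- Consider the semiparametric contextual bandit problem under the environment and boundedness assumptions, where at each round t the learner samples a_t from a distribution π_t depending measurably on the history. Assume λ ≥ 4d·log(9T) + 8·log(4T/δ). Then for any δ ∈ (0,1), with probability at least 1 − δ, the orthogonalized estimator satisfies ‖θ̂_t − θ‖_{Γ_t} ≤ √λ + √(27d·log(1 + 2T/d) + 54·log(4T/δ)) simultaneously for all t ∈ [T]. -/

import Mathlib

open MeasureTheory ProbabilityTheory Matrix Finset

/-!
Write `w_τ = z_τ - μ_τ` for the centered feature and `ζ_τ = ⟨θ, μ_τ⟩ + f_τ + ξ_τ`, so that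
`r_τ = ⟨θ, w_τ⟩ + ζ_τ` with `|ζ_τ| ≤ R = 3` and `‖w_τ‖² ≤ L = 4`. The ridge regression error is then
at most `√λ + ‖S_t‖`, where `S_t = ∑_{τ < t} ζ_τ w_τ` is measured in the norm of `Γ_t⁻¹`. As the
action is conditionally independent of the noise, the increments `ζ_τ w_τ` are centered given the
past, although `ζ_τ` is not.

The weight `exp (‖S_t‖² / (6 R²)) / √(det Γ_t / λ ^ d)` grows in one step at most by the factor
`1 + s`, where `s = ζ_t ⟨w_t, Γ_t⁻¹ S_t⟩ / (3 R²)`: this is `exp (s - s²) ≤ 1 + s`, valid for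
`s ≥ -3/5`, and for large `λ` the number `s` stays in this range as long as `‖S_t‖²` does not exceed
the squared confidence radius `β`. Killed after the first exceedance, the weight is therefore a
supermartingale. At the exceedance it is at least `1 / δ`, since `det Γ_t` is bounded by AM-GM for
the eigenvalues, so Ville's maximal inequality makes the exceedance an event of probability at
most `δ`.
-/

section ScalarInequality

lemma exp_sub_sq_le_one_add_of_nonneg {s : ℝ} (hs : 0 ≤ s) : Real.exp (s - s ^ 2) ≤ 1 + s := by
  have hpos : 0 < 1 - (s - s ^ 2) := by nlinarith [sq_nonneg (s - 1 / 2)]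
  have hexp : 1 - (s - s ^ 2) ≤ Real.exp (-(s - s ^ 2)) := by
    linarith [Real.add_one_le_exp (-(s - s ^ 2))]
  rw [← inv_inv (Real.exp (s - s ^ 2)), ← Real.exp_neg]
  refine (inv_anti₀ hpos hexp).trans ?_
  rw [inv_le_iff_one_le_mul₀ hpos]
  nlinarith [pow_nonneg hs 3]

lemma one_le_one_sub_mul_exp_add_sq {x : ℝ} (hx : 0 ≤ x) (hx' : x ≤ 3 / 5) :
    1 ≤ (1 - x) * Real.exp (x + x ^ 2) := by
  have htaylor : 1 + (x + x ^ 2) + (x + x ^ 2) ^ 2 / 2 + (x + x ^ 2) ^ 3 / 6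
      ≤ Real.exp (x + x ^ 2) := by
    simpa [Finset.sum_range_succ, Nat.factorial] using
      Real.sum_le_exp_of_nonneg (by positivity : 0 ≤ x + x ^ 2) 4
  refine le_trans ?_ (mul_le_mul_of_nonneg_left htaylor (by linarith))
  have hpoly : x ≤ (1 - x) * ((1 + x) ^ 2 / 2 + x * (1 + x) ^ 3 / 6) := by
    have h : 0 ≤ x * (3 / 5 - x) := mul_nonneg hx (by linarith)
    nlinarith [mul_nonneg hx h, mul_nonneg (sq_nonneg x) h,
      mul_nonneg (mul_nonneg hx (sq_nonneg x)) h]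
  nlinarith [mul_le_mul_of_nonneg_left hpoly (sq_nonneg x)]

lemma exp_sub_sq_le_one_add {s : ℝ} (hs : -(3 / 5) ≤ s) : Real.exp (s - s ^ 2) ≤ 1 + s := by
  rcases le_total 0 s with h | h
  · exact exp_sub_sq_le_one_add_of_nonneg h
  · have := one_le_one_sub_mul_exp_add_sq (neg_nonneg.2 h) (neg_le.1 hs)
    rw [show s - s ^ 2 = -(-s + (-s) ^ 2) by ring, Real.exp_neg,
      inv_le_iff_one_le_mul₀ (Real.exp_pos _)]
    linarith

lemma exp_div_one_add_le_sqrt {p : ℝ} (hp : 0 ≤ p) :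
    Real.exp (p / (1 + p) / 2) ≤ √(1 + p) := by
  have h1p : 0 < 1 + p := by linarith
  refine Real.le_sqrt_of_sq_le ?_
  rw [← Real.exp_nat_mul, ← Real.le_log_iff_exp_le h1p]
  calc ((2 : ℕ) : ℝ) * (p / (1 + p) / 2) = 1 - (1 + p)⁻¹ := by push_cast; field_simp; ring
    _ ≤ Real.log (1 + p) := Real.one_sub_inv_le_log_of_pos h1p

lemma exp_div_sqrt_le_one_add {ζ u p : ℝ} (hζ : |ζ| ≤ 1) (hu : u ^ 2 ≤ 3) (hp : 0 ≤ p)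
    (hp' : p ≤ 2 / 7) :
    Real.exp ((2 * ζ * u + ζ ^ 2 * p - u ^ 2) / (1 + p) / 6) / √(1 + p) ≤ 1 + ζ * u / 3 := by
  have h1p : 0 < 1 + p := by linarith
  have hζ2 : ζ ^ 2 ≤ 1 := (sq_le_one_iff_abs_le_one ζ).2 hζ
  have hζu : (ζ * u) ^ 2 ≤ u ^ 2 := by
    rw [mul_pow]; exact mul_le_of_le_one_left (sq_nonneg u) hζ2
  have hexponent : (2 * ζ * u + ζ ^ 2 * p - u ^ 2) / (1 + p) / 6 - p / (1 + p) / 2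
      ≤ ζ * u / 3 - (ζ * u / 3) ^ 2 := by
    rw [div_div, div_div, ← mul_div_mul_right p _ three_ne_zero, mul_assoc, ← sub_nonneg]
    have : 0 ≤ ζ * u / 3 - (ζ * u / 3) ^ 2 -
        (2 * ζ * u + ζ ^ 2 * p - u ^ 2 - p * 3) / (6 * (1 + p)) := by
      rw [sub_nonneg, div_le_iff₀ (by positivity)]
      nlinarith [mul_nonneg hp (sq_nonneg (u + 2 * ζ)), mul_le_mul_of_nonneg_left hζ2 hp,
        mul_le_mul_of_nonneg_left hζu h1p.le,
        mul_nonneg (sub_nonneg.2 hp') (sq_nonneg u)]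
    refine this.trans_eq ?_
    field_simp
    ring
  calc Real.exp ((2 * ζ * u + ζ ^ 2 * p - u ^ 2) / (1 + p) / 6) / √(1 + p)
      ≤ Real.exp ((2 * ζ * u + ζ ^ 2 * p - u ^ 2) / (1 + p) / 6) /
          Real.exp (p / (1 + p) / 2) := by
        gcongr
        exact exp_div_one_add_le_sqrt hp
    _ ≤ Real.exp (ζ * u / 3 - (ζ * u / 3) ^ 2) := by
        rw [← Real.exp_sub]
        exact Real.exp_le_exp.2 hexponent
    _ ≤ 1 + ζ * u / 3 := by
        refine exp_sub_sq_le_one_add ?_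
        have hsq : (ζ * u) ^ 2 ≤ (9 / 5) ^ 2 := by linarith
        linarith [(abs_le_of_sq_le_sq' hsq (by norm_num)).1]

lemma exp_div_sqrt_le_one_add_of_abs_le {R ζ u p : ℝ} (hR : 0 < R) (hζ : |ζ| ≤ R)
    (hu : u ^ 2 ≤ 3 * R ^ 2) (hp : 0 ≤ p) (hp' : p ≤ 2 / 7) :
    Real.exp ((2 * ζ * u + ζ ^ 2 * p - u ^ 2) / (1 + p) / (6 * R ^ 2)) / √(1 + p)
      ≤ 1 + ζ * u / (3 * R ^ 2) := by
  have h := exp_div_sqrt_le_one_add (ζ := ζ / R) (u := u / R)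
    (by rw [abs_div, abs_of_pos hR]; exact (div_le_one hR).2 hζ)
    (by rw [div_pow]; exact (div_le_iff₀ (by positivity)).2 hu) hp hp'
  have hexponent : (2 * (ζ / R) * (u / R) + (ζ / R) ^ 2 * p - (u / R) ^ 2) / (1 + p) / 6
      = (2 * ζ * u + ζ ^ 2 * p - u ^ 2) / (1 + p) / (6 * R ^ 2) := by
    field_simp
  have hlinear : ζ / R * (u / R) / 3 = ζ * u / (3 * R ^ 2) := by field_simp
  rwa [hexponent, hlinear] at h

end ScalarInequality

section MahalanobisNorm

variable {n : Type*} [Fintype n]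

lemma dotProduct_self_nonneg (x : n → ℝ) : 0 ≤ x ⬝ᵥ x :=
  sum_nonneg fun i _ => mul_self_nonneg (x i)

/-- The norm `‖x‖_M = √(xᵀ M x)` of a vector `x` with respect to a matrix `M`; it is a seminorm
when `M` is positive semidefinite. -/
noncomputable def mahalanobisNorm (M : Matrix n n ℝ) (x : n → ℝ) : ℝ := √(x ⬝ᵥ M *ᵥ x)

variable {M : Matrix n n ℝ}

lemma dotProduct_mulVec_self_nonneg (hM : M.PosSemidef) (x : n → ℝ) : 0 ≤ x ⬝ᵥ M *ᵥ x := by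
  simpa only [star_trivial] using hM.dotProduct_mulVec_nonneg x

lemma mahalanobisNorm_sub_le (hM : M.PosSemidef) (x y : n → ℝ) :
    mahalanobisNorm M (x - y) ≤ mahalanobisNorm M x + mahalanobisNorm M y := by
  have hnorm (v : n → ℝ) :
      mahalanobisNorm M v = (M.toSeminormedAddCommGroup hM).toNorm.norm v := by
    rw [mahalanobisNorm, dotProduct_comm]; rfl
  simpa only [hnorm] using @norm_sub_le _ (M.toSeminormedAddCommGroup hM).toSeminormedAddGroup x y

lemma dotProduct_mulVec_sq_le (hM : M.PosSemidef) (x y : n → ℝ) :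
    (x ⬝ᵥ M *ᵥ y) ^ 2 ≤ (x ⬝ᵥ M *ᵥ x) * (y ⬝ᵥ M *ᵥ y) := by
  let _ := M.toSeminormedAddCommGroup hM
  let _ := M.toInnerProductSpace hM
  have hinner (v v' : n → ℝ) : v ⬝ᵥ M *ᵥ v' = inner ℝ v v' := by
    rw [dotProduct_comm]; rfl
  simpa only [hinner, sq, real_inner_comm x y] using real_inner_mul_inner_self_le x y

variable [DecidableEq n]

lemma dotProduct_inv_mulVec_le_div (hM : M.PosDef) {lam : ℝ} (hlam : 0 < lam)
    (hlow : ∀ x, lam * (x ⬝ᵥ x) ≤ x ⬝ᵥ M *ᵥ x) (w : n → ℝ) :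
    w ⬝ᵥ M⁻¹ *ᵥ w ≤ (w ⬝ᵥ w) / lam := by
  have hinv := hlow (M⁻¹ *ᵥ w)
  rw [mulVec_mulVec, mul_nonsing_inv _ hM.det_pos.ne'.isUnit, one_mulVec,
    dotProduct_comm _ w] at hinv
  have hsq : 0 ≤ (lam • M⁻¹ *ᵥ w - w) ⬝ᵥ (lam • M⁻¹ *ᵥ w - w) := by
    simpa only [star_trivial] using dotProduct_star_self_nonneg (lam • M⁻¹ *ᵥ w - w)
  simp only [sub_dotProduct, dotProduct_sub, smul_dotProduct, dotProduct_smul, smul_eq_mul,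
    dotProduct_comm _ w] at hsq
  rw [le_div_iff₀ hlam]
  nlinarith [mul_le_mul_of_nonneg_left hinv hlam.le]

end MahalanobisNorm

section RankOneUpdate

variable {n 𝕜 : Type*} [Fintype n] [DecidableEq n] [Field 𝕜] {M : Matrix n n 𝕜}

lemma det_add_vecMulVec (hM : IsUnit M.det) (u v : n → 𝕜) :
    (M + vecMulVec u v).det = M.det * (1 + v ⬝ᵥ M⁻¹ *ᵥ u) := by
  rw [vecMulVec_eq Unit, det_add_replicateCol_mul_replicateRow hM,
    det_unique (1 + replicateRow Unit v * M⁻¹ * replicateCol Unit u), Matrix.add_apply,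
    Matrix.one_apply_eq, Matrix.mul_assoc, ← replicateCol_mulVec,
    replicateRow_mul_replicateCol_apply]

lemma inv_add_vecMulVec_mulVec (hM : IsUnit M.det) (u v x : n → 𝕜)
    (huv : 1 + v ⬝ᵥ M⁻¹ *ᵥ u ≠ 0) :
    (M + vecMulVec u v)⁻¹ *ᵥ x =
      M⁻¹ *ᵥ x - ((v ⬝ᵥ M⁻¹ *ᵥ x) / (1 + v ⬝ᵥ M⁻¹ *ᵥ u)) • M⁻¹ *ᵥ u := by
  have hdet : IsUnit (M + vecMulVec u v).det := by
    rw [det_add_vecMulVec hM]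
    exact hM.mul huv.isUnit
  have hcancel (y : n → 𝕜) : M *ᵥ M⁻¹ *ᵥ y = y := by
    rw [mulVec_mulVec, mul_nonsing_inv _ hM, one_mulVec]
  have hsolve : (M + vecMulVec u v) *ᵥ
      (M⁻¹ *ᵥ x - ((v ⬝ᵥ M⁻¹ *ᵥ x) / (1 + v ⬝ᵥ M⁻¹ *ᵥ u)) • M⁻¹ *ᵥ u) = x := by
    rw [mulVec_sub, mulVec_smul, add_mulVec, add_mulVec, hcancel, hcancel, vecMulVec_mulVec,
      vecMulVec_mulVec]
    ext i
    simp only [Pi.sub_apply, Pi.add_apply, Pi.smul_apply, smul_eq_mul, MulOpposite.smul_eq_mul_unop,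
      MulOpposite.unop_op]
    field_simp
    ring
  calc (M + vecMulVec u v)⁻¹ *ᵥ x = (M + vecMulVec u v)⁻¹ *ᵥ (M + vecMulVec u v) *ᵥ
        (M⁻¹ *ᵥ x - ((v ⬝ᵥ M⁻¹ *ᵥ x) / (1 + v ⬝ᵥ M⁻¹ *ᵥ u)) • M⁻¹ *ᵥ u) := by rw [hsolve]
    _ = _ := by rw [mulVec_mulVec _ _ (M + vecMulVec u v), nonsing_inv_mul _ hdet, one_mulVec]

lemma dotProduct_inv_add_vecMulVec_mulVec (hM : IsUnit M.det) (hsymm : M.IsSymm) (w S : n → 𝕜)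
    (ζ : 𝕜) (hw : 1 + w ⬝ᵥ M⁻¹ *ᵥ w ≠ 0) :
    (S + ζ • w) ⬝ᵥ (M + vecMulVec w w)⁻¹ *ᵥ (S + ζ • w) = S ⬝ᵥ M⁻¹ *ᵥ S +
      (2 * ζ * (w ⬝ᵥ M⁻¹ *ᵥ S) + ζ ^ 2 * (w ⬝ᵥ M⁻¹ *ᵥ w) - (w ⬝ᵥ M⁻¹ *ᵥ S) ^ 2) /
        (1 + w ⬝ᵥ M⁻¹ *ᵥ w) := by
  have hswap : S ⬝ᵥ M⁻¹ *ᵥ w = w ⬝ᵥ M⁻¹ *ᵥ S := by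
    rw [dotProduct_mulVec, ← mulVec_transpose, transpose_nonsing_inv, hsymm, dotProduct_comm]
  rw [inv_add_vecMulVec_mulVec hM w w _ hw]
  simp only [mulVec_add, mulVec_smul, add_dotProduct, dotProduct_add, dotProduct_sub,
    smul_dotProduct, dotProduct_smul, hswap, smul_eq_mul]
  field_simp
  ring

end RankOneUpdate

section AmGm

lemma det_le_trace_div_card_pow {n : Type*} [Fintype n] [DecidableEq n] [Nonempty n]
    {M : Matrix n n ℝ} (hM : M.PosSemidef) :
    M.det ≤ (M.trace / Fintype.card n) ^ Fintype.card n := by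
  have hnonneg : ∀ i ∈ univ, 0 ≤ hM.1.eigenvalues i := fun i _ => hM.eigenvalues_nonneg i
  have hcard : (0 : ℝ) < Fintype.card n := by exact_mod_cast Fintype.card_pos
  have hamgm := Real.geom_mean_le_arith_mean univ (fun _ => (1 : ℝ)) hM.1.eigenvalues
    (fun _ _ => zero_le_one) (by simpa using hcard) hnonneg
  simp only [Real.rpow_one, one_mul, sum_const, card_univ, nsmul_eq_mul, mul_one] at hamgm
  rw [hM.1.det_eq_prod_eigenvalues, hM.1.trace_eq_sum_eigenvalues]
  simp only [RCLike.ofReal_real_eq_id, id]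
  calc ∏ i, hM.1.eigenvalues i
      = ((∏ i, hM.1.eigenvalues i) ^ (Fintype.card n : ℝ)⁻¹) ^ Fintype.card n :=
        (Real.rpow_inv_natCast_pow (prod_nonneg hnonneg) Fintype.card_ne_zero).symm
    _ ≤ _ := pow_le_pow_left₀ (Real.rpow_nonneg (prod_nonneg hnonneg) _) hamgm _

end AmGm

section RegularizedGram

variable {n : Type*} {lam : ℝ} {ζ : ℕ → ℝ} {w : ℕ → n → ℝ}

/-- The sum `S_t = ∑_{τ < t} ζ_τ w_τ` of the first `t` features, weighted by the scalars `ζ`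
(rewards, or the noise in them). -/
def weightedSum (ζ : ℕ → ℝ) (w : ℕ → n → ℝ) (t : ℕ) : n → ℝ := ∑ τ ∈ range t, ζ τ • w τ

lemma weightedSum_succ (t : ℕ) : weightedSum ζ w (t + 1) = weightedSum ζ w t + ζ t • w t :=
  sum_range_succ _ t

lemma posSemidef_sum_vecMulVec_self [Finite n] (t : ℕ) :
    (∑ τ ∈ range t, vecMulVec (w τ) (w τ)).PosSemidef :=
  posSemidef_sum _ fun τ _ => by
    simpa only [star_trivial] using posSemidef_vecMulVec_self_star (w τ)

variable [DecidableEq n]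

/-- The Gram matrix `Γ_t = lam I + ∑_{τ < t} w_τ w_τᵀ` of the first `t` features, regularized
by `lam`. -/
def regGram (lam : ℝ) (w : ℕ → n → ℝ) (t : ℕ) : Matrix n n ℝ :=
  lam • (1 : Matrix n n ℝ) + ∑ τ ∈ range t, vecMulVec (w τ) (w τ)

lemma regGram_zero : regGram lam w 0 = lam • 1 := by simp [regGram]

lemma regGram_succ (t : ℕ) : regGram lam w (t + 1) = regGram lam w t + vecMulVec (w t) (w t) := by
  rw [regGram, regGram, sum_range_succ, add_assoc]

lemma posDef_regGram [Finite n] (hlam : 0 < lam) (t : ℕ) : (regGram lam w t).PosDef :=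
  (PosDef.one.smul hlam).add_posSemidef (posSemidef_sum_vecMulVec_self t)

variable [Fintype n]

/-- The squared norm `‖S_t‖²` of the weighted sum with respect to `Γ_t⁻¹`. -/
noncomputable def selfNormSq (lam : ℝ) (ζ : ℕ → ℝ) (w : ℕ → n → ℝ) (t : ℕ) : ℝ :=
  weightedSum ζ w t ⬝ᵥ (regGram lam w t)⁻¹ *ᵥ weightedSum ζ w t

/-- The exponential weight of the self-normalized sum, a supermartingale as long as the sum stays
small when the `ζ_τ w_τ` are conditionally centered and `|ζ| ≤ R`; the exponent `‖S_t‖² / (6 R²)`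
is compensated by the growth of the determinant of `Γ_t`. -/
noncomputable def expWeight (R lam : ℝ) (ζ : ℕ → ℝ) (w : ℕ → n → ℝ) (t : ℕ) : ℝ :=
  Real.exp (selfNormSq lam ζ w t / (6 * R ^ 2)) /
    √((regGram lam w t).det / lam ^ Fintype.card n)

lemma isUnit_det_regGram (hlam : 0 < lam) (t : ℕ) : IsUnit (regGram lam w t).det :=
  (posDef_regGram hlam t).det_pos.ne'.isUnit

lemma mul_dotProduct_self_le_regGram (t : ℕ) (x : n → ℝ) :
    lam * (x ⬝ᵥ x) ≤ x ⬝ᵥ regGram lam w t *ᵥ x := by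
  rw [regGram, add_mulVec, dotProduct_add, smul_mulVec, one_mulVec, dotProduct_smul, smul_eq_mul]
  exact le_add_of_nonneg_right (dotProduct_mulVec_self_nonneg (posSemidef_sum_vecMulVec_self t) x)

lemma dotProduct_inv_regGram_mulVec_nonneg (hlam : 0 < lam) (t : ℕ) (x : n → ℝ) :
    0 ≤ x ⬝ᵥ (regGram lam w t)⁻¹ *ᵥ x :=
  dotProduct_mulVec_self_nonneg (posDef_regGram hlam t).inv.posSemidef x

lemma dotProduct_inv_regGram_mulVec_le_div (hlam : 0 < lam) (t : ℕ) (x : n → ℝ) :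
    x ⬝ᵥ (regGram lam w t)⁻¹ *ᵥ x ≤ (x ⬝ᵥ x) / lam :=
  dotProduct_inv_mulVec_le_div (posDef_regGram hlam t) hlam (mul_dotProduct_self_le_regGram t) x

lemma det_regGram_succ (hlam : 0 < lam) (t : ℕ) : (regGram lam w (t + 1)).det =
    (regGram lam w t).det * (1 + w t ⬝ᵥ (regGram lam w t)⁻¹ *ᵥ w t) := by
  rw [regGram_succ, det_add_vecMulVec (isUnit_det_regGram hlam t)]

lemma trace_regGram (t : ℕ) :
    (regGram lam w t).trace = lam * Fintype.card n + ∑ τ ∈ range t, w τ ⬝ᵥ w τ := by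
  simp only [regGram, trace_add, trace_smul, trace_one, smul_eq_mul, trace_sum, trace_vecMulVec]

lemma det_regGram_div_le [Nonempty n] (hlam : 0 < lam) {L : ℝ} (hw : ∀ τ, w τ ⬝ᵥ w τ ≤ L)
    (t : ℕ) : (regGram lam w t).det / lam ^ Fintype.card n ≤
      (1 + L * t / (Fintype.card n * lam)) ^ Fintype.card n := by
  have hcard : (0 : ℝ) < Fintype.card n := by exact_mod_cast Fintype.card_pos
  have hpsd := (posDef_regGram hlam t (w := w)).posSemidef
  have hsum : ∑ τ ∈ range t, w τ ⬝ᵥ w τ ≤ L * t := by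
    simpa [mul_comm] using sum_le_card_nsmul (range t) (fun τ => w τ ⬝ᵥ w τ) L fun τ _ => hw τ
  rw [div_le_iff₀ (by positivity), ← mul_pow]
  calc (regGram lam w t).det
      ≤ ((regGram lam w t).trace / Fintype.card n) ^ Fintype.card n :=
        det_le_trace_div_card_pow hpsd
    _ ≤ ((lam * Fintype.card n + L * t) / Fintype.card n) ^ Fintype.card n := by
        refine pow_le_pow_left₀ (div_nonneg hpsd.trace_nonneg hcard.le) ?_ _
        rw [trace_regGram]
        gcongr
    _ = ((1 + L * t / (Fintype.card n * lam)) * lam) ^ Fintype.card n := by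
        congr 1
        field_simp

lemma selfNormSq_nonneg (hlam : 0 < lam) (t : ℕ) : 0 ≤ selfNormSq lam ζ w t :=
  dotProduct_inv_regGram_mulVec_nonneg hlam t _

lemma selfNormSq_zero : selfNormSq lam ζ w 0 = 0 := by simp [selfNormSq, weightedSum]

lemma selfNormSq_succ (hlam : 0 < lam) (t : ℕ) :
    selfNormSq lam ζ w (t + 1) = selfNormSq lam ζ w t +
      (2 * ζ t * (w t ⬝ᵥ (regGram lam w t)⁻¹ *ᵥ weightedSum ζ w t) +
        ζ t ^ 2 * (w t ⬝ᵥ (regGram lam w t)⁻¹ *ᵥ w t) -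
        (w t ⬝ᵥ (regGram lam w t)⁻¹ *ᵥ weightedSum ζ w t) ^ 2) /
      (1 + w t ⬝ᵥ (regGram lam w t)⁻¹ *ᵥ w t) := by
  have hsymm : (regGram lam w t).IsSymm :=
    (conjTranspose_eq_transpose_of_trivial _).symm.trans (posDef_regGram hlam t).1
  have hpos := dotProduct_inv_regGram_mulVec_nonneg hlam t (w := w) (w t)
  rw [selfNormSq, selfNormSq, weightedSum_succ, regGram_succ]
  exact dotProduct_inv_add_vecMulVec_mulVec (isUnit_det_regGram hlam t) hsymm _ _ _ (by positivity)

end RegularizedGram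

section ExpWeight

variable {n : Type*} [Fintype n] [DecidableEq n] {R lam L : ℝ} {ζ : ℕ → ℝ} {w : ℕ → n → ℝ}

lemma expWeight_zero (hlam : 0 < lam) : expWeight R lam ζ w 0 = 1 := by
  simp [expWeight, selfNormSq_zero, regGram_zero, hlam.ne']

lemma expWeight_nonneg (t : ℕ) : 0 ≤ expWeight R lam ζ w t := by
  unfold expWeight; positivity

lemma sq_dotProduct_inv_regGram_mulVec_weightedSum_le (hlam : 0 < lam) {t : ℕ}
    (hw : w t ⬝ᵥ w t ≤ L) (hN : L * selfNormSq lam ζ w t ≤ 3 * R ^ 2 * lam) :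
    (w t ⬝ᵥ (regGram lam w t)⁻¹ *ᵥ weightedSum ζ w t) ^ 2 ≤ 3 * R ^ 2 :=
  calc (w t ⬝ᵥ (regGram lam w t)⁻¹ *ᵥ weightedSum ζ w t) ^ 2
      ≤ (w t ⬝ᵥ (regGram lam w t)⁻¹ *ᵥ w t) * selfNormSq lam ζ w t :=
        dotProduct_mulVec_sq_le (posDef_regGram hlam t).inv.posSemidef _ _
    _ ≤ L / lam * selfNormSq lam ζ w t := by
        refine mul_le_mul_of_nonneg_right ?_ (selfNormSq_nonneg hlam t)
        exact (dotProduct_inv_regGram_mulVec_le_div hlam t _).trans (by gcongr)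
    _ ≤ 3 * R ^ 2 := by rwa [div_mul_eq_mul_div, div_le_iff₀ hlam]

lemma expWeight_succ_le (hR : 0 < R) (hlam : 0 < lam) {t : ℕ} (hζ : |ζ t| ≤ R)
    (hw : w t ⬝ᵥ w t ≤ L) (hL : L ≤ 2 / 7 * lam)
    (hN : L * selfNormSq lam ζ w t ≤ 3 * R ^ 2 * lam) :
    expWeight R lam ζ w (t + 1) ≤ expWeight R lam ζ w t *
      (1 + ζ t * (w t ⬝ᵥ (regGram lam w t)⁻¹ *ᵥ weightedSum ζ w t) / (3 * R ^ 2)) := by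
  have hp := dotProduct_inv_regGram_mulVec_nonneg hlam t (w := w) (w t)
  have hp' : w t ⬝ᵥ (regGram lam w t)⁻¹ *ᵥ w t ≤ 2 / 7 := by
    refine (dotProduct_inv_regGram_mulVec_le_div hlam t (w t)).trans ?_
    rw [div_le_iff₀ hlam]
    exact hw.trans hL
  have hdet : 0 ≤ (regGram lam w t).det / lam ^ Fintype.card n :=
    div_nonneg (posDef_regGram hlam t).det_pos.le (by positivity)
  rw [expWeight, expWeight, selfNormSq_succ hlam, det_regGram_succ hlam, mul_div_right_comm,
    Real.sqrt_mul hdet, add_div, Real.exp_add, mul_div_mul_comm]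
  exact mul_le_mul_of_nonneg_left (exp_div_sqrt_le_one_add_of_abs_le hR hζ
    (sq_dotProduct_inv_regGram_mulVec_weightedSum_le hlam hw hN) hp hp') (by positivity)

lemma one_div_le_expWeight [Nonempty n] (hR : 0 < R) (hlam : 0 < lam)
    (hw : ∀ τ, w τ ⬝ᵥ w τ ≤ L) {δ β : ℝ} (hδ : 0 < δ) {t T : ℕ} (htT : t ≤ T)
    (hβ : 3 * R ^ 2 * (Fintype.card n * Real.log (1 + L * T / (Fintype.card n * lam))) +
      6 * R ^ 2 * Real.log (1 / δ) ≤ β)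
    (hN : β ≤ selfNormSq lam ζ w t) :
    1 / δ ≤ expWeight R lam ζ w t := by
  have hL : 0 ≤ L := (dotProduct_self_nonneg (w 0)).trans (hw 0)
  have hD : 0 < 1 + L * T / (Fintype.card n * lam) := by positivity
  have hsqrt : √((regGram lam w t).det / lam ^ Fintype.card n) ≤
      Real.exp (Fintype.card n * Real.log (1 + L * T / (Fintype.card n * lam)) / 2) := by
    rw [Real.sqrt_le_left (Real.exp_pos _).le, ← Real.exp_nat_mul]
    push_cast
    rw [mul_div_cancel₀ _ two_ne_zero, Real.exp_nat_mul, Real.exp_log hD]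
    exact (det_regGram_div_le hlam hw t).trans (by gcongr)
  have hsqrt_pos : 0 < √((regGram lam w t).det / lam ^ Fintype.card n) :=
    Real.sqrt_pos.2 (div_pos (posDef_regGram hlam t).det_pos (by positivity))
  rw [expWeight, le_div_iff₀ hsqrt_pos]
  calc 1 / δ * √((regGram lam w t).det / lam ^ Fintype.card n)
      ≤ Real.exp (Real.log (1 / δ)) *
        Real.exp (Fintype.card n * Real.log (1 + L * T / (Fintype.card n * lam)) / 2) := by
        rw [Real.exp_log (by positivity)]
        gcongr
    _ ≤ Real.exp (selfNormSq lam ζ w t / (6 * R ^ 2)) := by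
        rw [← Real.exp_add, Real.exp_le_exp, le_div_iff₀ (by positivity)]
        linarith

end ExpWeight

section RidgeError

variable {n : Type*} [Fintype n] [DecidableEq n] {lam : ℝ} {θ : n → ℝ} {ζ r : ℕ → ℝ}
  {w : ℕ → n → ℝ}

lemma weightedSum_eq_regGram_mulVec_add (hr : ∀ τ, r τ = θ ⬝ᵥ w τ + ζ τ) (t : ℕ) :
    weightedSum r w t = regGram lam w t *ᵥ θ + (weightedSum ζ w t - lam • θ) := by
  have hgram : weightedSum r w t
      = (∑ τ ∈ range t, vecMulVec (w τ) (w τ)) *ᵥ θ + weightedSum ζ w t := by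
    rw [sum_mulVec, weightedSum, weightedSum, ← sum_add_distrib]
    refine sum_congr rfl fun τ _ => ?_
    rw [vecMulVec_mulVec, hr, add_smul, dotProduct_comm θ, op_smul_eq_smul]
  rw [hgram, regGram, add_mulVec, smul_mulVec, one_mulVec]
  abel

lemma mahalanobisNorm_smul_inv_regGram_le (hlam : 0 < lam) (t : ℕ) (hθ : θ ⬝ᵥ θ ≤ 1) :
    mahalanobisNorm (regGram lam w t)⁻¹ (lam • θ) ≤ √lam := by
  have h := (dotProduct_inv_regGram_mulVec_le_div hlam t (w := w) θ).trans
    (div_le_div_of_nonneg_right hθ hlam.le)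
  refine Real.sqrt_le_sqrt ?_
  simp only [mulVec_smul, smul_dotProduct, dotProduct_smul, smul_eq_mul]
  calc lam * (lam * (θ ⬝ᵥ (regGram lam w t)⁻¹ *ᵥ θ)) ≤ lam * (lam * (1 / lam)) := by gcongr
    _ = lam := by field_simp

lemma mahalanobisNorm_ridge_sub_le (hlam : 0 < lam) (hθ : θ ⬝ᵥ θ ≤ 1)
    (hr : ∀ τ, r τ = θ ⬝ᵥ w τ + ζ τ) (t : ℕ) :
    mahalanobisNorm (regGram lam w t) ((regGram lam w t)⁻¹ *ᵥ weightedSum r w t - θ) ≤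
      √lam + √(selfNormSq lam ζ w t) := by
  have hpd := posDef_regGram hlam t (w := w)
  have hdet := isUnit_det_regGram hlam t (w := w)
  have herror : (regGram lam w t)⁻¹ *ᵥ weightedSum r w t - θ
      = (regGram lam w t)⁻¹ *ᵥ (weightedSum ζ w t - lam • θ) := by
    rw [weightedSum_eq_regGram_mulVec_add hr, mulVec_add, mulVec_mulVec, nonsing_inv_mul _ hdet,
      one_mulVec, add_sub_cancel_left]
  calc mahalanobisNorm (regGram lam w t) ((regGram lam w t)⁻¹ *ᵥ weightedSum r w t - θ)
      = mahalanobisNorm (regGram lam w t)⁻¹ (weightedSum ζ w t - lam • θ) := by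
        rw [herror, mahalanobisNorm, mahalanobisNorm, mulVec_mulVec _ (regGram lam w t),
          mul_nonsing_inv _ hdet, one_mulVec, dotProduct_comm]
    _ ≤ mahalanobisNorm (regGram lam w t)⁻¹ (weightedSum ζ w t) +
        mahalanobisNorm (regGram lam w t)⁻¹ (lam • θ) :=
        mahalanobisNorm_sub_le hpd.inv.posSemidef _ _
    _ ≤ √lam + √(selfNormSq lam ζ w t) := by
        rw [add_comm]
        exact add_le_add (mahalanobisNorm_smul_inv_regGram_le hlam t hθ) le_rfl

end RidgeError

section Measurability

variable {Ω n : Type*} {m : MeasurableSpace Ω}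
  {lam : ℝ} {ζ : ℕ → Ω → ℝ} {w : ℕ → Ω → n → ℝ} {t : ℕ}

lemma measurable_regGram [DecidableEq n] (hw : ∀ τ < t, Measurable (w τ)) (i j : n) :
    Measurable fun ω => regGram lam (fun τ => w τ ω) t i j := by
  simp only [regGram, Matrix.add_apply, Matrix.sum_apply, vecMulVec_apply]
  refine measurable_const.add (Finset.measurable_sum _ fun τ hτ => ?_)
  have := hw τ (mem_range.1 hτ)
  fun_prop

lemma measurable_weightedSum [Finite n] (hζ : ∀ τ < t, Measurable (ζ τ))
    (hw : ∀ τ < t, Measurable (w τ)) :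
    Measurable fun ω => weightedSum (fun τ => ζ τ ω) (fun τ => w τ ω) t :=
  Finset.measurable_sum _ fun τ hτ => (hζ τ (mem_range.1 hτ)).smul (hw τ (mem_range.1 hτ))

variable [Fintype n]

lemma measurable_dotProduct {x y : Ω → n → ℝ} (hx : Measurable x) (hy : Measurable y) :
    Measurable fun ω => x ω ⬝ᵥ y ω := by
  unfold dotProduct
  fun_prop

variable [DecidableEq n]

lemma measurable_matrix_det {G : Ω → Matrix n n ℝ} (hG : ∀ i j, Measurable fun ω => G ω i j) :
    Measurable fun ω => (G ω).det := by
  simp only [det_apply]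
  fun_prop

lemma measurable_matrix_adjugate {G : Ω → Matrix n n ℝ}
    (hG : ∀ i j, Measurable fun ω => G ω i j) (i j : n) :
    Measurable fun ω => (G ω).adjugate i j := by
  simp only [adjugate_apply]
  refine measurable_matrix_det fun k l => ?_
  rcases eq_or_ne k j with rfl | hk
  · simp only [updateRow_self, measurable_const]
  · simpa only [updateRow_ne hk] using hG k l

lemma measurable_matrix_inv_mulVec {G : Ω → Matrix n n ℝ} {x : Ω → n → ℝ}
    (hG : ∀ i j, Measurable fun ω => G ω i j) (hx : Measurable x) :
    Measurable fun ω => (G ω)⁻¹ *ᵥ x ω := by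
  refine measurable_pi_lambda _ fun i => ?_
  have hdet := measurable_matrix_det hG
  have hadj := measurable_matrix_adjugate hG
  simp only [Matrix.inv_def, mulVec, dotProduct, Matrix.smul_apply, smul_eq_mul,
    Ring.inverse_eq_inv']
  fun_prop

lemma measurable_inv_regGram_mulVec_weightedSum (hζ : ∀ τ < t, Measurable (ζ τ))
    (hw : ∀ τ < t, Measurable (w τ)) :
    Measurable fun ω => (regGram lam (fun τ => w τ ω) t)⁻¹ *ᵥ
      weightedSum (fun τ => ζ τ ω) (fun τ => w τ ω) t :=
  measurable_matrix_inv_mulVec (measurable_regGram hw) (measurable_weightedSum hζ hw)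

lemma measurable_selfNormSq (hζ : ∀ τ < t, Measurable (ζ τ)) (hw : ∀ τ < t, Measurable (w τ)) :
    Measurable fun ω => selfNormSq lam (fun τ => ζ τ ω) (fun τ => w τ ω) t :=
  measurable_dotProduct (measurable_weightedSum hζ hw)
    (measurable_inv_regGram_mulVec_weightedSum hζ hw)

lemma measurable_expWeight {R : ℝ} (hζ : ∀ τ < t, Measurable (ζ τ))
    (hw : ∀ τ < t, Measurable (w τ)) :
    Measurable fun ω => expWeight R lam (fun τ => ζ τ ω) (fun τ => w τ ω) t :=
  ((measurable_selfNormSq hζ hw).div_const _).exp.div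
    ((measurable_matrix_det (measurable_regGram hw)).div_const _).sqrt

end Measurability

section Ville

variable {Ω : Type*} {m0 : MeasurableSpace Ω} {μ : Measure Ω} [IsFiniteMeasure μ]
  {ℱ : Filtration ℕ m0} {X : ℕ → Ω → ℝ}

lemma integral_stoppedValue_le_integral_zero (hX : Supermartingale X ℱ μ) {τ : Ω → WithTop ℕ}
    (hτ : IsStoppingTime ℱ τ) {N : ℕ} (hτN : ∀ ω, τ ω ≤ N) :
    μ[stoppedValue X τ] ≤ μ[X 0] := by
  have hmono : ∫ ω, -X 0 ω ∂μ ≤ ∫ ω, -stoppedValue X τ ω ∂μ :=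
    hX.neg.expected_stoppedValue_mono (isStoppingTime_const ℱ 0) hτ (fun ω => zero_le) hτN
  rwa [integral_neg, integral_neg, neg_le_neg_iff] at hmono

lemma mul_measureReal_exists_le_le_integral_zero (hX : Supermartingale X ℱ μ)
    (hX_nonneg : ∀ t ω, 0 ≤ X t ω) (ε : ℝ) (N : ℕ) :
    ε * μ.real {ω | ∃ t ≤ N, ε ≤ X t ω} ≤ μ[X 0] := by
  let τ : Ω → WithTop ℕ := fun ω => (hittingBtwn X (Set.Ici ε) 0 N ω : ℕ)
  have hτ : IsStoppingTime ℱ τ :=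
    hX.stronglyAdapted.adapted.isStoppingTime_hittingBtwn measurableSet_Ici
  have hτN (ω : Ω) : τ ω ≤ N := WithTop.coe_le_coe.2 (hittingBtwn_le ω)
  have hint : Integrable (stoppedValue X τ) μ := integrable_stoppedValue ℕ hτ hX.integrable hτN
  have hsub : {ω | ∃ t ≤ N, ε ≤ X t ω} ⊆ {ω | ε ≤ stoppedValue X τ ω} :=
    fun ω ⟨t, htN, ht⟩ => stoppedValue_hittingBtwn_mem ⟨t, ⟨zero_le, htN⟩, ht⟩
  rcases le_total 0 ε with hε | hε
  · calc ε * μ.real {ω | ∃ t ≤ N, ε ≤ X t ω}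
        ≤ ε * μ.real {ω | ε ≤ stoppedValue X τ ω} := by gcongr; finiteness
      _ ≤ μ[stoppedValue X τ] :=
        mul_meas_ge_le_integral_of_nonneg (.of_forall fun ω => hX_nonneg _ ω) hint ε
      _ ≤ μ[X 0] := integral_stoppedValue_le_integral_zero hX hτ hτN
  · exact (mul_nonpos_of_nonpos_of_nonneg hε measureReal_nonneg).trans
      (integral_nonneg (hX_nonneg 0))

end Ville

section BoundedVector

variable {Ω n : Type*} {m0 : MeasurableSpace Ω} {μ : Measure Ω} [Fintype n]

lemma norm_le_sqrt_of_dotProduct_self_le {x : n → ℝ} {C : ℝ} (hx : x ⬝ᵥ x ≤ C) : ‖x‖ ≤ √C := by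
  refine (pi_norm_le_iff_of_nonneg C.sqrt_nonneg).2 fun i => Real.abs_le_sqrt (le_trans ?_ hx)
  rw [sq]
  exact single_le_sum (f := fun j => x j * x j) (fun j _ => mul_self_nonneg (x j)) (mem_univ i)

lemma integrable_of_dotProduct_self_le [IsFiniteMeasure μ] {x : Ω → n → ℝ} {C : ℝ}
    (hx : Measurable x) (hC : ∀ ω, x ω ⬝ᵥ x ω ≤ C) : Integrable x μ :=
  .of_bound hx.aestronglyMeasurable (√C) <|
    .of_forall fun ω => norm_le_sqrt_of_dotProduct_self_le (hC ω)

lemma condExp_dotProduct_of_measurable_left {m : MeasurableSpace Ω} {c x : Ω → n → ℝ}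
    (hc : Measurable[m] c) (hcx : Integrable (fun ω => c ω ⬝ᵥ x ω) μ) (hx : Integrable x μ) :
    μ[fun ω => c ω ⬝ᵥ x ω | m] =ᵐ[μ] fun ω => c ω ⬝ᵥ (μ[x | m]) ω :=
  condExp_bilin_of_stronglyMeasurable_left
    (dotProductBilin ℝ ℝ (m := n) (A := ℝ)).toContinuousBilinearMap hc.stronglyMeasurable hcx hx

/-- Random features `w_t` with `‖w_t‖² ≤ L` and noise `|ζ_t| ≤ R`, both revealed at time `t + 1`,
such that the increments `ζ_t w_t` of the weighted sum are centered given `ℱ_t`. -/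
structure CenteredNoise (μ : Measure Ω) (ℱ : Filtration ℕ m0) (R L : ℝ) (ζ : ℕ → Ω → ℝ)
    (w : ℕ → Ω → n → ℝ) : Prop where
  measurable_noise : ∀ t, Measurable[ℱ (t + 1)] (ζ t)
  measurable_feature : ∀ t, Measurable[ℱ (t + 1)] (w t)
  abs_noise_le : ∀ t ω, |ζ t ω| ≤ R
  feature_sq_le : ∀ t ω, w t ω ⬝ᵥ w t ω ≤ L
  condExp_eq_zero : ∀ t, μ[fun ω => ζ t ω • w t ω | ℱ t] =ᵐ[μ] 0

namespace CenteredNoise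

variable {R L : ℝ} {ζ : ℕ → Ω → ℝ} {w : ℕ → Ω → n → ℝ} {ℱ : Filtration ℕ m0}
  (h : CenteredNoise μ ℱ R L ζ w)
include h

lemma measurable_noise_of_lt {s t : ℕ} (hst : s < t) : Measurable[ℱ t] (ζ s) :=
  (h.measurable_noise s).mono (ℱ.mono hst) le_rfl

lemma measurable_feature_of_lt {s t : ℕ} (hst : s < t) : Measurable[ℱ t] (w s) :=
  (h.measurable_feature s).mono (ℱ.mono hst) le_rfl

lemma measurable_noise_smul_feature (t : ℕ) : Measurable fun ω => ζ t ω • w t ω :=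
  ((h.measurable_noise t).mono (ℱ.le _) le_rfl).smul
    ((h.measurable_feature t).mono (ℱ.le _) le_rfl)

lemma integrable_noise_smul_feature [IsFiniteMeasure μ] (t : ℕ) :
    Integrable (fun ω => ζ t ω • w t ω) μ := by
  refine integrable_of_dotProduct_self_le (C := R ^ 2 * L) (h.measurable_noise_smul_feature t)
    fun ω => ?_
  rw [smul_dotProduct, dotProduct_smul, smul_smul, smul_eq_mul, ← sq]
  have hζ := abs_le.1 (h.abs_noise_le t ω)
  exact mul_le_mul (sq_le_sq' hζ.1 hζ.2) (h.feature_sq_le t ω)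
    (dotProduct_self_nonneg (w t ω)) (sq_nonneg R)

end CenteredNoise

end BoundedVector

section KilledWeight

variable {Ω n : Type*} {m0 : MeasurableSpace Ω} {μ : Measure Ω} {ℱ : Filtration ℕ m0} [Fintype n]
  [DecidableEq n]

/-- The event that the self-normalized sum does not exceed `β` before time `t`. -/
def smallBefore (lam β : ℝ) (ζ : ℕ → Ω → ℝ) (w : ℕ → Ω → n → ℝ) (t : ℕ) : Set Ω :=
  {ω | ∀ s < t, selfNormSq lam (fun τ => ζ τ ω) (fun τ => w τ ω) s ≤ β}

/-- The exponential weight, killed one step after the self-normalized sum first exceeds `β`: it is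
kept at the exceedance time itself, where it is large. -/
noncomputable def killedWeight (R lam β : ℝ) (ζ : ℕ → Ω → ℝ) (w : ℕ → Ω → n → ℝ) (t : ℕ) : Ω → ℝ :=
  (smallBefore lam β ζ w t).indicator fun ω =>
    expWeight R lam (fun τ => ζ τ ω) (fun τ => w τ ω) t

/-- The coefficient of `ζ_t w_t` in the linear upper bound `killedWeight_succ_le` for the increment
of the killed weight. -/
noncomputable def killedWeightSlope (R lam β : ℝ) (ζ : ℕ → Ω → ℝ) (w : ℕ → Ω → n → ℝ) (t : ℕ) :
    Ω → n → ℝ :=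
  (smallBefore lam β ζ w (t + 1)).indicator fun ω =>
    (expWeight R lam (fun τ => ζ τ ω) (fun τ => w τ ω) t / (3 * R ^ 2)) •
      ((regGram lam (fun τ => w τ ω) t)⁻¹ *ᵥ weightedSum (fun τ => ζ τ ω) (fun τ => w τ ω) t)

variable {R L lam β : ℝ} {ζ : ℕ → Ω → ℝ} {w : ℕ → Ω → n → ℝ}

lemma smallBefore_succ_subset (t : ℕ) : smallBefore lam β ζ w (t + 1) ⊆ smallBefore lam β ζ w t :=
  fun _ hω s hs => hω s (hs.trans t.lt_succ_self)

lemma mul_selfNormSq_le_of_mem_smallBefore {C : ℝ} (hLβ : L * β ≤ C) {t : ℕ} {ω : Ω}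
    (hw : w t ω ⬝ᵥ w t ω ≤ L) (hω : ω ∈ smallBefore lam β ζ w (t + 1)) :
    L * selfNormSq lam (fun τ => ζ τ ω) (fun τ => w τ ω) t ≤ C := by
  have hL : 0 ≤ L := (dotProduct_self_nonneg (w t ω)).trans hw
  exact (mul_le_mul_of_nonneg_left (hω t t.lt_succ_self) hL).trans hLβ

lemma killedWeight_zero (hlam : 0 < lam) : killedWeight R lam β ζ w 0 = 1 := by
  ext ω
  rw [killedWeight, Set.indicator_of_mem fun s hs => absurd hs s.not_lt_zero, expWeight_zero hlam,
    Pi.one_apply]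

lemma killedWeight_nonneg (t : ℕ) (ω : Ω) : 0 ≤ killedWeight R lam β ζ w t ω :=
  Set.indicator_nonneg (fun _ _ => expWeight_nonneg t) ω

lemma killedWeight_succ_le (hR : 0 < R) (hlam : 0 < lam) (hL : L ≤ 2 / 7 * lam)
    (hLβ : L * β ≤ 3 * R ^ 2 * lam) {t : ℕ} {ω : Ω} (hζ : |ζ t ω| ≤ R) (hw : w t ω ⬝ᵥ w t ω ≤ L) :
    killedWeight R lam β ζ w (t + 1) ω ≤
      killedWeight R lam β ζ w t ω + killedWeightSlope R lam β ζ w t ω ⬝ᵥ ζ t ω • w t ω := by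
  by_cases hω : ω ∈ smallBefore lam β ζ w (t + 1)
  · have hN := mul_selfNormSq_le_of_mem_smallBefore hLβ hw hω
    rw [killedWeight, killedWeight, killedWeightSlope, Set.indicator_of_mem hω,
      Set.indicator_of_mem hω, Set.indicator_of_mem (smallBefore_succ_subset t hω)]
    refine (expWeight_succ_le hR hlam hζ hw hL hN).trans_eq ?_
    rw [smul_dotProduct, dotProduct_smul, dotProduct_comm (w t ω), smul_eq_mul, smul_eq_mul]
    ring
  · rw [killedWeight, killedWeightSlope, Set.indicator_of_notMem hω, Set.indicator_of_notMem hω,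
      zero_dotProduct, add_zero]
    exact killedWeight_nonneg t ω

lemma abs_killedWeightSlope_dotProduct_le (hR : 0 < R) (hlam : 0 < lam)
    (hLβ : L * β ≤ 3 * R ^ 2 * lam) {t : ℕ} {ω : Ω} (hζ : |ζ t ω| ≤ R) (hw : w t ω ⬝ᵥ w t ω ≤ L) :
    |killedWeightSlope R lam β ζ w t ω ⬝ᵥ ζ t ω • w t ω| ≤ killedWeight R lam β ζ w t ω := by
  by_cases hω : ω ∈ smallBefore lam β ζ w (t + 1)
  · have hN := mul_selfNormSq_le_of_mem_smallBefore hLβ hw hω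
    rw [killedWeight, killedWeightSlope, Set.indicator_of_mem hω,
      Set.indicator_of_mem (smallBefore_succ_subset t hω), smul_dotProduct, dotProduct_smul,
      dotProduct_comm, smul_eq_mul, smul_eq_mul, abs_mul, abs_div,
      abs_of_nonneg (expWeight_nonneg t), abs_of_pos (by positivity : 0 < 3 * R ^ 2),
      div_mul_eq_mul_div, mul_div_assoc]
    refine mul_le_of_le_one_right (expWeight_nonneg t) ((div_le_one (by positivity)).2 ?_)
    have hu := sq_dotProduct_inv_regGram_mulVec_weightedSum_le hlam hw hN
    refine abs_le_of_sq_le_sq ?_ (by positivity)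
    rw [mul_pow]
    calc ζ t ω ^ 2 * _ ^ 2 ≤ R ^ 2 * (3 * R ^ 2) :=
          mul_le_mul (sq_le_sq' (abs_le.1 hζ).1 (abs_le.1 hζ).2) hu (sq_nonneg _) (sq_nonneg _)
      _ ≤ (3 * R ^ 2) ^ 2 := by nlinarith [sq_nonneg (R ^ 2)]
  · rw [killedWeightSlope, Set.indicator_of_notMem hω, zero_dotProduct, abs_zero]
    exact killedWeight_nonneg t ω

lemma exists_le_one_div_le_killedWeight [Nonempty n] (hR : 0 < R) (hlam : 0 < lam) {ω : Ω}
    (hw : ∀ τ, w τ ω ⬝ᵥ w τ ω ≤ L) {δ : ℝ} (hδ : 0 < δ) {t T : ℕ} (htT : t ≤ T)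
    (hβ : 3 * R ^ 2 * (Fintype.card n * Real.log (1 + L * T / (Fintype.card n * lam))) +
      6 * R ^ 2 * Real.log (1 / δ) ≤ β)
    (ht : β < selfNormSq lam (fun τ => ζ τ ω) (fun τ => w τ ω) t) :
    ∃ s ≤ t, 1 / δ ≤ killedWeight R lam β ζ w s ω := by
  classical
  have hexceed : ∃ s, β < selfNormSq lam (fun τ => ζ τ ω) (fun τ => w τ ω) s := ⟨t, ht⟩
  have hfirst : ω ∈ smallBefore lam β ζ w (Nat.find hexceed) :=
    fun s hs => not_lt.1 (Nat.find_min hexceed hs)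
  refine ⟨Nat.find hexceed, Nat.find_min' hexceed ht, ?_⟩
  rw [killedWeight, Set.indicator_of_mem hfirst]
  exact one_div_le_expWeight hR hlam hw hδ ((Nat.find_min' hexceed ht).trans htT) hβ
    (Nat.find_spec hexceed).le

namespace CenteredNoise

variable (h : CenteredNoise μ ℱ R L ζ w)
include h

lemma measurableSet_smallBefore {s t : ℕ} (hst : s ≤ t + 1) :
    MeasurableSet[ℱ t] (smallBefore lam β ζ w s) := by
  have hinter : smallBefore lam β ζ w s =
      ⋂ i, ⋂ _ : i < s, {ω | selfNormSq lam (fun τ => ζ τ ω) (fun τ => w τ ω) i ≤ β} := by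
    ext ω
    simp only [smallBefore, Set.mem_ofPred_eq, Set.mem_iInter]
  rw [hinter]
  refine .iInter fun i => .iInter fun hi => measurableSet_le ?_ measurable_const
  have hit : i ≤ t := Nat.lt_succ_iff.1 (hi.trans_le hst)
  exact measurable_selfNormSq (fun τ hτ => h.measurable_noise_of_lt (hτ.trans_le hit))
    fun τ hτ => h.measurable_feature_of_lt (hτ.trans_le hit)

lemma measurable_killedWeight (t : ℕ) : Measurable[ℱ t] (killedWeight R lam β ζ w t) :=
  .indicator (measurable_expWeight (fun _ => h.measurable_noise_of_lt)
    fun _ => h.measurable_feature_of_lt) (h.measurableSet_smallBefore t.le_succ)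

lemma measurable_killedWeightSlope (t : ℕ) :
    Measurable[ℱ t] (killedWeightSlope R lam β ζ w t) := by
  have hζ (τ : ℕ) (hτ : τ < t) := h.measurable_noise_of_lt hτ
  have hw (τ : ℕ) (hτ : τ < t) := h.measurable_feature_of_lt hτ
  exact .indicator (((measurable_expWeight hζ hw).div_const _).smul
    (measurable_inv_regGram_mulVec_weightedSum hζ hw)) (h.measurableSet_smallBefore le_rfl)

lemma integrable_killedWeightSlope_dotProduct (hR : 0 < R) (hlam : 0 < lam)
    (hLβ : L * β ≤ 3 * R ^ 2 * lam) {t : ℕ} (hint : Integrable (killedWeight R lam β ζ w t) μ) :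
    Integrable (fun ω => killedWeightSlope R lam β ζ w t ω ⬝ᵥ ζ t ω • w t ω) μ :=
  hint.mono' (measurable_dotProduct ((h.measurable_killedWeightSlope t).mono (ℱ.le t) le_rfl)
      (h.measurable_noise_smul_feature t)).aestronglyMeasurable <|
    .of_forall fun ω =>
      abs_killedWeightSlope_dotProduct_le hR hlam hLβ (h.abs_noise_le t ω) (h.feature_sq_le t ω)

lemma integrable_killedWeight [IsFiniteMeasure μ] (hR : 0 < R) (hlam : 0 < lam)
    (hL : L ≤ 2 / 7 * lam) (hLβ : L * β ≤ 3 * R ^ 2 * lam) (t : ℕ) :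
    Integrable (killedWeight R lam β ζ w t) μ := by
  induction t with
  | zero =>
    rw [killedWeight_zero hlam]
    exact integrable_const 1
  | succ t ih =>
    refine (ih.add (h.integrable_killedWeightSlope_dotProduct hR hlam hLβ ih)).mono'
      ((h.measurable_killedWeight _).mono (ℱ.le _) le_rfl).aestronglyMeasurable
      (.of_forall fun ω => ?_)
    rw [Real.norm_of_nonneg (killedWeight_nonneg _ ω)]
    exact killedWeight_succ_le hR hlam hL hLβ (h.abs_noise_le t ω) (h.feature_sq_le t ω)

lemma supermartingale_killedWeight [IsFiniteMeasure μ] (hR : 0 < R) (hlam : 0 < lam)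
    (hL : L ≤ 2 / 7 * lam) (hLβ : L * β ≤ 3 * R ^ 2 * lam) :
    Supermartingale (killedWeight R lam β ζ w) ℱ μ := by
  have hint := h.integrable_killedWeight hR hlam hL hLβ
  refine supermartingale_nat (fun t => (h.measurable_killedWeight t).stronglyMeasurable) hint
    fun t => ?_
  have hslope := h.integrable_killedWeightSlope_dotProduct hR hlam hLβ (hint t)
  have hle := condExp_mono (m := ℱ t) (hint (t + 1)) ((hint t).add hslope) <|
    .of_forall fun ω =>
      killedWeight_succ_le hR hlam hL hLβ (h.abs_noise_le t ω) (h.feature_sq_le t ω)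
  have hpull := condExp_dotProduct_of_measurable_left (h.measurable_killedWeightSlope t) hslope
    (h.integrable_noise_smul_feature t)
  filter_upwards [hle, condExp_add (hint t) hslope (ℱ t), hpull, h.condExp_eq_zero t]
    with ω hle hadd hpull hzero
  rwa [hadd, Pi.add_apply, hpull, hzero, Pi.zero_apply, dotProduct_zero, add_zero,
    condExp_of_stronglyMeasurable (ℱ.le t) (h.measurable_killedWeight t).stronglyMeasurable
      (hint t)] at hle

lemma measureReal_exists_one_div_le_killedWeight_le [IsProbabilityMeasure μ] (hR : 0 < R)
    (hlam : 0 < lam) (hL : L ≤ 2 / 7 * lam) (hLβ : L * β ≤ 3 * R ^ 2 * lam) {δ : ℝ} (hδ : 0 < δ)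
    (T : ℕ) : μ.real {ω | ∃ t ≤ T, 1 / δ ≤ killedWeight R lam β ζ w t ω} ≤ δ := by
  have hville := mul_measureReal_exists_le_le_integral_zero
    (h.supermartingale_killedWeight hR hlam hL hLβ) killedWeight_nonneg (1 / δ) T
  rw [killedWeight_zero hlam, div_mul_eq_mul_div, one_mul, div_le_iff₀ hδ] at hville
  simpa using hville

theorem one_sub_le_measureReal_selfNormSq_le [IsProbabilityMeasure μ] [Nonempty n] (hR : 0 < R)
    (hL : L ≤ 2 / 7 * lam) (hlam : 0 < lam) (hLβ : L * β ≤ 3 * R ^ 2 * lam) {δ : ℝ} (hδ : 0 < δ)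
    {T : ℕ} (hβ : 3 * R ^ 2 * (Fintype.card n *
      Real.log (1 + L * T / (Fintype.card n * lam))) + 6 * R ^ 2 * Real.log (1 / δ) ≤ β) :
    1 - δ ≤ μ.real {ω | ∀ t ≤ T,
      selfNormSq lam (fun τ => ζ τ ω) (fun τ => w τ ω) t ≤ β} := by
  let good : Set Ω := {ω | ∀ t ≤ T, selfNormSq lam (fun τ => ζ τ ω) (fun τ => w τ ω) t ≤ β}
  let bad : Set Ω := {ω | ∃ t ≤ T, 1 / δ ≤ killedWeight R lam β ζ w t ω}
  have hcover : Set.univ ⊆ good ∪ bad := fun ω _ => or_iff_not_imp_left.2 fun hω => by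
    simp only [good, Set.mem_ofPred_eq, not_forall, not_le] at hω
    obtain ⟨t, htT, ht⟩ := hω
    obtain ⟨s, hst, hs⟩ := exists_le_one_div_le_killedWeight hR hlam
      (fun τ => h.feature_sq_le τ ω) hδ htT hβ ht
    exact ⟨s, hst.trans htT, hs⟩
  have hone : 1 ≤ μ.real good + μ.real bad :=
    calc 1 = μ.real Set.univ := probReal_univ.symm
      _ ≤ μ.real (good ∪ bad) := measureReal_mono hcover
      _ ≤ μ.real good + μ.real bad := measureReal_union_le good bad
  linarith [h.measureReal_exists_one_div_le_killedWeight_le hR hlam hL hLβ hδ T (β := β)]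

end CenteredNoise

end KilledWeight

section EuclideanBall

variable {A n : Type*} [Fintype A] [Fintype n]

lemma two_mul_dotProduct_le_add (x y : n → ℝ) : 2 * (x ⬝ᵥ y) ≤ x ⬝ᵥ x + y ⬝ᵥ y := by
  have h := dotProduct_self_nonneg (x - y)
  rw [sub_dotProduct, dotProduct_sub, dotProduct_sub, dotProduct_comm y x] at h
  linarith

lemma abs_two_mul_dotProduct_le_add (x y : n → ℝ) : |2 * (x ⬝ᵥ y)| ≤ x ⬝ᵥ x + y ⬝ᵥ y := by
  have h := two_mul_dotProduct_le_add (-x) y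
  rw [neg_dotProduct_neg, neg_dotProduct] at h
  exact abs_le'.2 ⟨two_mul_dotProduct_le_add x y, by linarith⟩

lemma dotProduct_sub_self_le (x y : n → ℝ) : (x - y) ⬝ᵥ (x - y) ≤ 2 * (x ⬝ᵥ x + y ⬝ᵥ y) := by
  have h := abs_le.1 (abs_two_mul_dotProduct_le_add x y)
  rw [sub_dotProduct, dotProduct_sub, dotProduct_sub, dotProduct_comm y x]
  linarith [h.1]

lemma dotProduct_sum_smul_self_le {q : A → ℝ} {z : A → n → ℝ} {C : ℝ} (hq : ∀ b, 0 ≤ q b)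
    (hq1 : ∑ b, q b = 1) (hz : ∀ b, z b ⬝ᵥ z b ≤ C) :
    (∑ b, q b • z b) ⬝ᵥ (∑ b, q b • z b) ≤ C := by
  let v := ∑ b, q b • z b
  have h : v ⬝ᵥ v ≤ (C + v ⬝ᵥ v) / 2 :=
    calc v ⬝ᵥ v = ∑ b, q b * (z b ⬝ᵥ v) := by
          simp only [v, sum_dotProduct, smul_dotProduct, smul_eq_mul]
      _ ≤ ∑ b, q b * ((C + v ⬝ᵥ v) / 2) := by
          gcongr with b
          · exact hq b
          · linarith [two_mul_dotProduct_le_add (z b) v, hz b]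
      _ = (C + v ⬝ᵥ v) / 2 := by rw [← sum_mul, hq1, one_mul]
  change v ⬝ᵥ v ≤ C
  linarith

end EuclideanBall

section OrthogonalizedAction

variable {Ω A n : Type*} {m m0 : MeasurableSpace Ω} {μ : Measure Ω}

lemma condExp_mul_of_condIndepFun [StandardBorelSpace Ω] [IsFiniteMeasure μ] (hm : m ≤ m0)
    {X Y : Ω → ℝ} (hX : Measurable X) (hY : Measurable Y) (hXint : Integrable X μ)
    (hYint : Integrable Y μ) (hXYint : Integrable (X * Y) μ) (hXY : CondIndepFun m hm X Y μ) :
    μ[X * Y | m] =ᵐ[μ] μ[X | m] * μ[Y | m] := by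
  have hmap := ae_of_ae_trim hm ((condIndepFun_iff_map_prod_eq_prod_map_map hX hY).1 hXY)
  filter_upwards [hmap, condExp_ae_eq_integral_condExpKernel hm hXint,
    condExp_ae_eq_integral_condExpKernel hm hYint,
    condExp_ae_eq_integral_condExpKernel hm hXYint] with ω hω hXω hYω hXYω
  have hindep : X ⟂ᵢ[condExpKernel μ m ω] Y := by
    rw [indepFun_iff_map_prod_eq_prod_map_map hX.aemeasurable hY.aemeasurable]
    rwa [Kernel.map_apply _ (hX.prodMk hY), Kernel.prod_apply, Kernel.map_apply _ hX,
      Kernel.map_apply _ hY] at hω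
  rw [hXYω, Pi.mul_apply, hXω, hYω]
  exact hindep.integral_mul_eq_mul_integral hX.aestronglyMeasurable hY.aestronglyMeasurable

lemma condExp_sub_mul_eq_zero_of_condIndepFun [StandardBorelSpace Ω] [IsFiniteMeasure μ]
    (hm : m ≤ m0) {X Y p : Ω → ℝ} (hX : Measurable X) (hY : Measurable Y) (hp : Measurable[m] p)
    (hXint : Integrable X μ) (hYint : Integrable Y μ) (hXYint : Integrable (X * Y) μ)
    (hpYint : Integrable (p * Y) μ) (hXp : μ[X | m] =ᵐ[μ] p) (hXY : CondIndepFun m hm X Y μ) :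
    μ[(X - p) * Y | m] =ᵐ[μ] 0 := by
  have hpull := condExp_mul_of_stronglyMeasurable_left hp.stronglyMeasurable hpYint hYint
  rw [sub_mul]
  filter_upwards [condExp_sub hXYint hpYint m, hpull, hXp,
    condExp_mul_of_condIndepFun hm hX hY hXint hYint hXYint hXY] with ω hsub hpull hXp hmul
  rw [hsub, Pi.sub_apply, hmul, hpull, Pi.mul_apply, Pi.mul_apply, hXp, sub_self, Pi.zero_apply]

variable {a : Ω → A} {p : Ω → A → ℝ} {z : A → Ω → n → ℝ}

/-- The indicator of the event that the random action `a` is `b`, centered by the probability that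
`p` gives to `b`. -/
def centeredIndicator [DecidableEq A] (p : Ω → A → ℝ) (a : Ω → A) (b : A) (ω : Ω) : ℝ :=
  (if a ω = b then 1 else 0) - p ω b

lemma measurable_centeredIndicator [DecidableEq A] [MeasurableSpace A] [MeasurableSingletonClass A]
    (ha : Measurable a) {b : A} (hp : Measurable fun ω => p ω b) :
    Measurable (centeredIndicator p a b) :=
  (Measurable.ite (ha (measurableSet_singleton b)) measurable_const measurable_const).sub hp

variable [Fintype A]

/-- The mean feature of an action drawn from `p`: the vector `μ_τ` of the orthogonalized
estimator. -/
def meanFeature (p : Ω → A → ℝ) (z : A → Ω → n → ℝ) (ω : Ω) : n → ℝ := ∑ b, p ω b • z b ω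

/-- The feature of the random action `a` minus the mean feature: the vector `z_τ - μ_τ` of the
orthogonalized estimator. -/
def centeredFeature (p : Ω → A → ℝ) (z : A → Ω → n → ℝ) (a : Ω → A) (ω : Ω) : n → ℝ :=
  z (a ω) ω - meanFeature p z ω

lemma measurable_meanFeature [Finite n] (hp : ∀ b, Measurable fun ω => p ω b)
    (hz : ∀ b, Measurable (z b)) : Measurable (meanFeature p z) :=
  measurable_fun_sum _ fun b _ => (hp b).smul (hz b)

lemma centeredFeature_eq_sum [DecidableEq A] (ω : Ω) :
    centeredFeature p z a ω = ∑ b, centeredIndicator p a b ω • z b ω := by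
  simp only [centeredFeature, meanFeature, centeredIndicator, sub_smul, ite_smul, one_smul,
    zero_smul, sum_sub_distrib, sum_ite_eq, mem_univ, if_true]

lemma measurable_centeredFeature [Finite n] [MeasurableSpace A] [MeasurableSingletonClass A]
    (ha : Measurable a) (hp : ∀ b, Measurable fun ω => p ω b) (hz : ∀ b, Measurable (z b)) :
    Measurable (centeredFeature p z a) := by
  classical
  rw [funext centeredFeature_eq_sum]
  exact measurable_sum _ fun b _ => (measurable_centeredIndicator ha (hp b)).smul (hz b)

variable [DecidableEq A]

/-- `p` is a version of the conditional law of the random action `a` given the σ-algebra `m`. -/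
structure IsConditionalLaw (μ : Measure Ω) (m : MeasurableSpace Ω) (a : Ω → A) (p : Ω → A → ℝ) :
    Prop where
  measurable_prob : ∀ b, Measurable[m] fun ω => p ω b
  nonneg : ∀ ω b, 0 ≤ p ω b
  sum_eq_one : ∀ ω, ∑ b, p ω b = 1
  condExp_indicator : ∀ b, μ[fun ω => if a ω = b then (1 : ℝ) else 0 | m] =ᵐ[μ] fun ω => p ω b

namespace IsConditionalLaw

variable (h : IsConditionalLaw μ m a p)
include h

lemma prob_le_one (ω : Ω) (b : A) : p ω b ≤ 1 := by
  rw [← h.sum_eq_one ω]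
  exact single_le_sum (fun b _ => h.nonneg ω b) (mem_univ b)

lemma abs_centeredIndicator_le_one (ω : Ω) (b : A) : |centeredIndicator p a b ω| ≤ 1 := by
  have hp0 := h.nonneg ω b
  have hp1 := h.prob_le_one ω b
  rw [centeredIndicator, abs_le]
  split_ifs <;> constructor <;> linarith

lemma meanFeature_dotProduct_self_le [Fintype n] {C : ℝ} (hz : ∀ b ω, z b ω ⬝ᵥ z b ω ≤ C)
    (ω : Ω) : meanFeature p z ω ⬝ᵥ meanFeature p z ω ≤ C :=
  dotProduct_sum_smul_self_le (h.nonneg ω) (h.sum_eq_one ω) fun b => hz b ω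

lemma centeredFeature_dotProduct_self_le [Fintype n] {C : ℝ} (hz : ∀ b ω, z b ω ⬝ᵥ z b ω ≤ C)
    (ω : Ω) : centeredFeature p z a ω ⬝ᵥ centeredFeature p z a ω ≤ 4 * C :=
  (dotProduct_sub_self_le _ _).trans
    (by linarith [hz (a ω) ω, h.meanFeature_dotProduct_self_le hz ω])

variable [MeasurableSpace A] [MeasurableSingletonClass A] {ζ ξ g : Ω → ℝ}

lemma integrable_centeredIndicator_mul (hm : m ≤ m0) (ha : Measurable a) (hζ : Integrable ζ μ)
    (b : A) : Integrable (centeredIndicator p a b * ζ) μ :=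
  hζ.bdd_mul (measurable_centeredIndicator ha
    ((h.measurable_prob b).mono hm le_rfl)).aestronglyMeasurable
    (.of_forall (h.abs_centeredIndicator_le_one · b))

lemma condExp_smul_centeredFeature_eq_zero [Fintype n] (hm : m ≤ m0) (ha : Measurable a)
    (hz : ∀ b, Measurable[m] (z b)) {C : ℝ} (hzC : ∀ b ω, z b ω ⬝ᵥ z b ω ≤ C)
    (hζ : Integrable ζ μ) (hzero : ∀ b, μ[centeredIndicator p a b * ζ | m] =ᵐ[μ] 0) :
    μ[fun ω => ζ ω • centeredFeature p z a ω | m] =ᵐ[μ] 0 := by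
  have hsum : (fun ω => ζ ω • centeredFeature p z a ω) =
      ∑ b, (centeredIndicator p a b * ζ) • z b := by
    ext1 ω
    simp only [centeredFeature_eq_sum, smul_sum, smul_smul, Finset.sum_apply,
      Pi.smul_apply', Pi.mul_apply, mul_comm (ζ ω)]
  have hηint := h.integrable_centeredIndicator_mul hm ha hζ
  have hint (b : A) : Integrable ((centeredIndicator p a b * ζ) • z b) μ :=
    (hηint b).smul_bdd _ ((hz b).mono hm le_rfl).aestronglyMeasurable
      (.of_forall fun ω => norm_le_sqrt_of_dotProduct_self_le (hzC b ω))
  have hpull (b : A) := condExp_smul_of_aestronglyMeasurable_right (hηint b) (hint b)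
    (hz b).stronglyMeasurable.aestronglyMeasurable
  rw [hsum]
  filter_upwards [condExp_finsetSum (fun b _ => hint b) m, ae_all_iff.2 hpull,
    ae_all_iff.2 hzero] with ω hω hpull hzero
  rw [hω, Finset.sum_apply]
  refine sum_eq_zero fun b _ => ?_
  rw [hpull b, Pi.smul_apply', hzero b, Pi.zero_apply, zero_smul]

variable [StandardBorelSpace Ω] [IsFiniteMeasure μ]

lemma condExp_centeredIndicator_mul_eq_zero (hm : m ≤ m0) (ha : Measurable a) (hξ : Measurable ξ)
    (hξint : Integrable ξ μ) (haξ : CondIndepFun m hm a ξ μ) (b : A) :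
    μ[centeredIndicator p a b * ξ | m] =ᵐ[μ] 0 := by
  have hind : Measurable fun b' : A => if b' = b then (1 : ℝ) else 0 :=
    .ite (measurableSet_singleton b) measurable_const measurable_const
  have hX := (hind.comp ha).aestronglyMeasurable (μ := μ)
  have hX1 (ω : Ω) : ‖if a ω = b then (1 : ℝ) else 0‖ ≤ 1 := by
    split_ifs <;> norm_num
  have hp1 (ω : Ω) : ‖p ω b‖ ≤ 1 := by
    rw [Real.norm_of_nonneg (h.nonneg ω b)]
    exact h.prob_le_one ω b
  exact condExp_sub_mul_eq_zero_of_condIndepFun hm (hind.comp ha) hξ (h.measurable_prob b)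
    (.of_bound hX 1 (.of_forall hX1)) hξint (hξint.bdd_mul hX (.of_forall hX1))
    (hξint.bdd_mul ((h.measurable_prob b).mono hm le_rfl).aestronglyMeasurable (.of_forall hp1))
    (h.condExp_indicator b) (haξ.comp hind measurable_id)

lemma condExp_centeredIndicator_mul_add_eq_zero (hm : m ≤ m0) (ha : Measurable a)
    (hg : Measurable[m] g) (hgint : Integrable g μ) (hξ : Measurable ξ) (hξint : Integrable ξ μ)
    (haξ : CondIndepFun m hm a ξ μ) (b : A) :
    μ[centeredIndicator p a b * (g + ξ) | m] =ᵐ[μ] 0 := by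
  have hag : CondIndepFun m hm a g μ := condIndepFun_of_measurable_right ha hg
  rw [mul_add]
  filter_upwards [condExp_add (h.integrable_centeredIndicator_mul hm ha hgint b)
      (h.integrable_centeredIndicator_mul hm ha hξint b) m,
    h.condExp_centeredIndicator_mul_eq_zero hm ha (hg.mono hm le_rfl) hgint hag b,
    h.condExp_centeredIndicator_mul_eq_zero hm ha hξ hξint haξ b] with ω hadd hgzero hξzero
  rw [hadd, Pi.add_apply, hgzero, hξzero, Pi.zero_apply, add_zero]

end IsConditionalLaw

end OrthogonalizedAction

section SemiparametricBandit

variable {Ω A n : Type*} [Fintype A] [Fintype n] {a : ℕ → Ω → A} {p : ℕ → Ω → A → ℝ}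
  {z : ℕ → A → Ω → n → ℝ} {f g ξ : ℕ → Ω → ℝ} {θ : n → ℝ} {R C : ℝ}

/-- The effective noise `⟨θ, μ_t⟩ + f_t + ξ_t` that remains in the reward `r_t` once the mean
feature `μ_t` is subtracted from the feature of the played action. -/
def effectiveNoise (θ : n → ℝ) (p : ℕ → Ω → A → ℝ) (z : ℕ → A → Ω → n → ℝ) (f ξ : ℕ → Ω → ℝ)
    (t : ℕ) (ω : Ω) : ℝ :=
  θ ⬝ᵥ meanFeature (p t) (z t) ω + f t ω + ξ t ω

lemma reward_eq_dotProduct_centeredFeature_add (t : ℕ) (ω : Ω) :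
    θ ⬝ᵥ z t (a t ω) ω + f t ω + ξ t ω =
      θ ⬝ᵥ centeredFeature (p t) (z t) (a t) ω + effectiveNoise θ p z f ξ t ω := by
  rw [centeredFeature, effectiveNoise, dotProduct_sub]
  ring

variable {m0 : MeasurableSpace Ω} [StandardBorelSpace Ω] {μ : Measure Ω} [IsFiniteMeasure μ]
  {ℱ : Filtration ℕ m0} [DecidableEq A] [MeasurableSpace A] [MeasurableSingletonClass A]

lemma centeredNoise_add_centeredFeature (hp : ∀ t, IsConditionalLaw μ (ℱ t) (a t) (p t))
    (ha : ∀ t, Measurable[ℱ (t + 1)] (a t)) (hz : ∀ t b, Measurable[ℱ t] (z t b))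
    (hzC : ∀ t b ω, z t b ω ⬝ᵥ z t b ω ≤ C) (hg : ∀ t, Measurable[ℱ t] (g t))
    (hξ : ∀ t, Measurable[ℱ (t + 1)] (ξ t)) (hgξ : ∀ t ω, |g t ω| + |ξ t ω| ≤ R)
    (haξ : ∀ t, CondIndepFun (ℱ t) (ℱ.le t) (a t) (ξ t) μ) :
    CenteredNoise μ ℱ R (4 * C) (fun t => g t + ξ t)
      fun t => centeredFeature (p t) (z t) (a t) where
  measurable_noise t := ((hg t).mono (ℱ.mono t.le_succ) le_rfl).add (hξ t)
  measurable_feature t := measurable_centeredFeature (ha t)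
    (fun b => ((hp t).measurable_prob b).mono (ℱ.mono t.le_succ) le_rfl)
    fun b => (hz t b).mono (ℱ.mono t.le_succ) le_rfl
  abs_noise_le t ω := (abs_add_le _ _).trans (hgξ t ω)
  feature_sq_le t := (hp t).centeredFeature_dotProduct_self_le (hzC t)
  condExp_eq_zero t := by
    have ha' : Measurable (a t) := (ha t).mono (ℱ.le _) le_rfl
    have hξ' : Measurable (ξ t) := (hξ t).mono (ℱ.le _) le_rfl
    have hgint : Integrable (g t) μ := .of_bound ((hg t).mono (ℱ.le t) le_rfl).aestronglyMeasurable
      R (.of_forall fun ω => (le_add_of_nonneg_right (abs_nonneg _)).trans (hgξ t ω))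
    have hξint : Integrable (ξ t) μ := .of_bound hξ'.aestronglyMeasurable R
      (.of_forall fun ω => (le_add_of_nonneg_left (abs_nonneg _)).trans (hgξ t ω))
    exact (hp t).condExp_smul_centeredFeature_eq_zero (ℱ.le t) ha' (hz t) (hzC t)
      (hgint.add hξint)
      ((hp t).condExp_centeredIndicator_mul_add_eq_zero (ℱ.le t) ha' (hg t) hgint hξ' hξint (haξ t))

lemma centeredNoise_effectiveNoise (hp : ∀ t, IsConditionalLaw μ (ℱ t) (a t) (p t))
    (ha : ∀ t, Measurable[ℱ (t + 1)] (a t)) (hz : ∀ t b, Measurable[ℱ t] (z t b))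
    (hz1 : ∀ t b ω, z t b ω ⬝ᵥ z t b ω ≤ 1) (hθ : θ ⬝ᵥ θ ≤ 1) (hf : ∀ t, Measurable[ℱ t] (f t))
    (hf1 : ∀ t ω, |f t ω| ≤ 1) (hξ : ∀ t, Measurable[ℱ (t + 1)] (ξ t)) (hξ1 : ∀ t ω, |ξ t ω| ≤ 1)
    (haξ : ∀ t, CondIndepFun (ℱ t) (ℱ.le t) (a t) (ξ t) μ) :
    CenteredNoise μ ℱ 3 4 (effectiveNoise θ p z f ξ)
      fun t => centeredFeature (p t) (z t) (a t) := by
  rw [← mul_one (4 : ℝ)]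
  refine centeredNoise_add_centeredFeature hp ha hz hz1 (fun t => ?_) hξ (fun t ω => ?_) haξ
  · exact (measurable_dotProduct measurable_const
      (measurable_meanFeature (hp t).measurable_prob (hz t))).add (hf t)
  · have hmean := (hp t).meanFeature_dotProduct_self_le (hz1 t) ω
    have hθmean := abs_two_mul_dotProduct_le_add θ (meanFeature (p t) (z t) ω)
    rw [abs_mul, abs_two] at hθmean
    linarith [abs_add_le (θ ⬝ᵥ meanFeature (p t) (z t) ω) (f t ω), hf1 t ω, hξ1 t ω]

end SemiparametricBandit

section ConfidenceRadius

variable {d T δ lam : ℝ}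

/-- The square of the radius of the confidence ellipsoid, without its regularization bias `√λ`. -/
noncomputable def sqConfidenceRadius (d T δ : ℝ) : ℝ :=
  27 * d * Real.log (1 + 2 * T / d) + 54 * Real.log (4 * T / δ)

lemma one_le_log_four_mul_div (hT : 1 ≤ T) (hδ : 0 < δ) (hδ1 : δ ≤ 1) :
    1 ≤ Real.log (4 * T / δ) := by
  have h4 : 4 ≤ 4 * T / δ := by
    rw [le_div_iff₀ hδ]
    nlinarith
  rw [Real.le_log_iff_exp_le (by linarith)]
  linarith [Real.exp_one_lt_d9]

lemma two_le_log_nine_mul (hT : 1 ≤ T) : 2 ≤ Real.log (9 * T) := by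
  have h3 : 1 ≤ Real.log 3 := by
    rw [Real.le_log_iff_exp_le (by norm_num)]
    linarith [Real.exp_one_lt_d9]
  calc 2 ≤ 2 * Real.log 3 := by linarith
    _ = Real.log 9 := by rw [← Real.log_rpow (by norm_num)]; norm_num
    _ ≤ Real.log (9 * T) := Real.log_le_log (by norm_num) (by linarith)

lemma fourteen_le_of_log_add_log_le (hd : 1 ≤ d) (hT : 1 ≤ T) (hδ : 0 < δ) (hδ1 : δ ≤ 1)
    (hlam : 4 * d * Real.log (9 * T) + 8 * Real.log (4 * T / δ) ≤ lam) : 14 ≤ lam := by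
  nlinarith [two_le_log_nine_mul hT, one_le_log_four_mul_div hT hδ hδ1]

lemma sqConfidenceRadius_le (hd : 1 ≤ d) (hT : 1 ≤ T)
    (hlam : 4 * d * Real.log (9 * T) + 8 * Real.log (4 * T / δ) ≤ lam) :
    sqConfidenceRadius d T δ ≤ 27 / 4 * lam := by
  have harg : 1 + 2 * T / d ≤ 9 * T := by
    linarith [div_le_self (by linarith : 0 ≤ 2 * T) hd]
  have hlog : d * Real.log (1 + 2 * T / d) ≤ d * Real.log (9 * T) := by gcongr
  rw [sqConfidenceRadius]
  linarith

lemma log_det_add_log_le_sqConfidenceRadius (hd : 0 < d) (hT : 1 ≤ T) (hδ : 0 < δ)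
    (hlam : 2 ≤ lam) : 27 * (d * Real.log (1 + 4 * T / (d * lam))) + 54 * Real.log (1 / δ) ≤
      sqConfidenceRadius d T δ := by
  have harg : 4 * T / (d * lam) ≤ 2 * T / d := by
    rw [div_le_div_iff₀ (by positivity) hd]
    nlinarith [mul_pos hd (zero_lt_one.trans_le hT)]
  have hlog : d * Real.log (1 + 4 * T / (d * lam)) ≤ d * Real.log (1 + 2 * T / d) := by gcongr
  have hlogδ : Real.log (1 / δ) ≤ Real.log (4 * T / δ) := by
    gcongr
    linarith
  rw [sqConfidenceRadius]
  linarith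

theorem one_sub_le_measureReal_selfNormSq_le_sqConfidenceRadius {Ω n : Type*}
    {m0 : MeasurableSpace Ω} {μ : Measure Ω} [IsProbabilityMeasure μ] {ℱ : Filtration ℕ m0}
    [Fintype n] [DecidableEq n] [Nonempty n] {ζ : ℕ → Ω → ℝ} {w : ℕ → Ω → n → ℝ}
    (h : CenteredNoise μ ℱ 3 4 ζ w) {T : ℕ} (hT : 0 < T) (hδ : 0 < δ) (hδ1 : δ ≤ 1)
    (hlam : 4 * Fintype.card n * Real.log (9 * T) + 8 * Real.log (4 * T / δ) ≤ lam) :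
    1 - δ ≤ μ.real {ω | ∀ t ≤ T, selfNormSq lam (fun τ => ζ τ ω) (fun τ => w τ ω) t ≤
      sqConfidenceRadius (Fintype.card n) T δ} := by
  have hT1 : (1 : ℝ) ≤ T := Nat.one_le_cast.2 hT
  have hd : (1 : ℝ) ≤ Fintype.card n := Nat.one_le_cast.2 Fintype.card_pos
  have hlam14 := fourteen_le_of_log_add_log_le hd hT1 hδ hδ1 hlam
  have hupper := sqConfidenceRadius_le hd hT1 hlam
  have hlower := log_det_add_log_le_sqConfidenceRadius (d := Fintype.card n)
    (by linarith) hT1 hδ (by linarith : 2 ≤ lam)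
  exact h.one_sub_le_measureReal_selfNormSq_le three_pos (by linarith) (by linarith)
    (by linarith) hδ (by linarith)

end ConfidenceRadius

theorem stmt_14_general {Ω : Type*} {m0 : MeasurableSpace Ω} [StandardBorelSpace Ω]
    (μ : Measure Ω) [IsProbabilityMeasure μ]
    (ℱ : Filtration ℕ m0)
    {A : Type*} [Fintype A] [DecidableEq A] [MeasurableSpace A]
    [MeasurableSingletonClass A]
    {d T : ℕ} (hd : 0 < d)
    (δ lam : ℝ) (hδ : 0 < δ) (hδ1 : δ < 1)
    (hlamlb : 4 * d * Real.log (9 * T) + 8 * Real.log (4 * T / δ) ≤ lam)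
    (θ : Fin d → ℝ) (hθ : Real.sqrt (θ ⬝ᵥ θ) ≤ 1)
    (z : ℕ → A → Ω → (Fin d → ℝ)) (f : ℕ → Ω → ℝ) (ξ : ℕ → Ω → ℝ)
    (hzmeas : ∀ t b, Measurable[ℱ t] (z t b))
    (hzbd : ∀ t b ω, Real.sqrt (z t b ω ⬝ᵥ z t b ω) ≤ 1)
    (hfmeas : ∀ t, Measurable[ℱ t] (f t))
    (hfbd : ∀ t ω, f t ω ∈ Set.Icc (-1 : ℝ) 1)
    (hξmeas : ∀ t, Measurable[ℱ (t + 1)] (ξ t))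
    (hξbd : ∀ t ω, |ξ t ω| ≤ 1)
    (a : ℕ → Ω → A) (π : ℕ → Ω → A → ℝ)
    (hameas : ∀ t, Measurable[ℱ (t + 1)] (a t))
    (hπmeas : ∀ t b, Measurable[ℱ t] (fun ω => π t ω b))
    (hπprob : ∀ t ω, (∀ b, 0 ≤ π t ω b) ∧ (∑ b, π t ω b) = 1)
    (hπlaw : ∀ t b, μ[(fun ω => if a t ω = b then (1 : ℝ) else 0) | ℱ t]
      =ᵐ[μ] fun ω => π t ω b)
    (haξ : ∀ t, CondIndepFun (ℱ t) (ℱ.le t) (a t) (ξ t) μ)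
    (r : ℕ → Ω → ℝ) (hr : ∀ t ω, r t ω = θ ⬝ᵥ z t (a t ω) ω + f t ω + ξ t ω)
    (mu : ℕ → Ω → (Fin d → ℝ)) (hmu : ∀ t ω, mu t ω = ∑ b, π t ω b • z t b ω)
    (Γ : ℕ → Ω → Matrix (Fin d) (Fin d) ℝ)
    (hΓ : ∀ t ω, Γ t ω = lam • (1 : Matrix (Fin d) (Fin d) ℝ) +
      ∑ τ ∈ Finset.range t,
        vecMulVec (z τ (a τ ω) ω - mu τ ω) (z τ (a τ ω) ω - mu τ ω))
    (θhat : ℕ → Ω → (Fin d → ℝ))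
    (hθhat : ∀ t ω, θhat t ω =
      (Γ t ω)⁻¹.mulVec (∑ τ ∈ Finset.range t, r τ ω • (z τ (a τ ω) ω - mu τ ω))) :
    ENNReal.ofReal (1 - δ) ≤
      μ {ω | ∀ t < T,
        Real.sqrt ((θhat t ω - θ) ⬝ᵥ (Γ t ω).mulVec (θhat t ω - θ)) ≤
          Real.sqrt lam +
            Real.sqrt (27 * d * Real.log (1 + 2 * T / d) + 54 * Real.log (4 * T / δ))} := by
  obtain rfl | hT := T.eq_zero_or_pos
  · simp [hδ.le]
  have : Nonempty (Fin d) := ⟨⟨0, hd⟩⟩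
  have hlam : 0 < lam := by
    linarith [fourteen_le_of_log_add_log_le (Nat.one_le_cast.2 hd) (Nat.one_le_cast.2 hT) hδ hδ1.le
      hlamlb]
  have hπ (t : ℕ) : IsConditionalLaw μ (ℱ t) (a t) (π t) :=
    ⟨hπmeas t, fun ω => (hπprob t ω).1, fun ω => (hπprob t ω).2, hπlaw t⟩
  have hnoise := centeredNoise_effectiveNoise hπ hameas hzmeas
    (fun t b ω => Real.sqrt_le_one.1 (hzbd t b ω)) (Real.sqrt_le_one.1 hθ) hfmeas
    (fun t ω => abs_le.2 (hfbd t ω)) hξmeas hξbd haξ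
  have hconc := one_sub_le_measureReal_selfNormSq_le_sqConfidenceRadius hnoise hT hδ hδ1.le
    (lam := lam) (by simpa only [Fintype.card_fin] using hlamlb)
  refine (ENNReal.ofReal_le_ofReal hconc).trans ?_
  rw [ofReal_measureReal, Fintype.card_fin]
  refine measure_mono fun ω hω t ht => ?_
  obtain rfl : mu = fun τ => meanFeature (π τ) (z τ) := funext₂ hmu
  have hΓω : Γ t ω = regGram lam (fun τ => centeredFeature (π τ) (z τ) (a τ) ω) t := hΓ t ω
  have hθhatω : θhat t ω = (Γ t ω)⁻¹ *ᵥ weightedSum (fun τ => r τ ω)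
      (fun τ => centeredFeature (π τ) (z τ) (a τ) ω) t := hθhat t ω
  have hridge := mahalanobisNorm_ridge_sub_le hlam (Real.sqrt_le_one.1 hθ)
    (fun τ => (hr τ ω).trans (reward_eq_dotProduct_centeredFeature_add (p := π) τ ω)) t
  rw [← hΓω, ← hθhatω] at hridge
  exact hridge.trans (add_le_add le_rfl (Real.sqrt_le_sqrt (hω t ht.le)))

/-- **Concentration of the orthogonalized estimator, general case (Lemma: estimator_general).**
Semiparametric contextual bandit under the environment and boundedness assumptions, with the
learner sampling `a_t ∼ π_t`, an `F_t`-measurable distribution over the (finite) action set;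
rewards are `r_t = ⟨θ, z_{t,a_t}⟩ + f_t + ξ_t`.  With `μ_t = E_{a∼π_t}[z_{t,a}]`,
`Γ_t = λI + ∑_{τ<t}(z_τ−μ_τ)(z_τ−μ_τ)ᵀ`, `θ̂_t = Γ_t⁻¹ ∑_{τ<t}(z_τ−μ_τ)r_τ`, and
`λ ≥ 4d log(9T) + 8 log(4T/δ)`, with probability at least `1 − δ`,
`‖θ̂_t − θ‖_{Γ_t} ≤ √λ + √(27 d log(1 + 2T/d) + 54 log(4T/δ))` simultaneously for all
rounds `t` (i.e. all sample sizes `< T`). -/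
theorem stmt_14 {Ω : Type*} {m0 : MeasurableSpace Ω} [StandardBorelSpace Ω] [Nonempty Ω]
    (μ : Measure Ω) [IsProbabilityMeasure μ]
    (ℱ : Filtration ℕ m0)
    {A : Type*} [Fintype A] [DecidableEq A] [Nonempty A] [MeasurableSpace A]
    [MeasurableSingletonClass A]
    {d T : ℕ} (hd : 0 < d)
    (δ lam : ℝ) (hδ : 0 < δ) (hδ1 : δ < 1) (hlam : 0 < lam)
    (hlamlb : 4 * d * Real.log (9 * T) + 8 * Real.log (4 * T / δ) ≤ lam)
    (θ : Fin d → ℝ) (hθ : Real.sqrt (θ ⬝ᵥ θ) ≤ 1)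
    -- context features, confounder and noise: adapted, adversarial, bounded
    (z : ℕ → A → Ω → (Fin d → ℝ)) (f : ℕ → Ω → ℝ) (ξ : ℕ → Ω → ℝ)
    (hzmeas : ∀ t b, Measurable[ℱ t] (z t b))
    (hzbd : ∀ t b ω, Real.sqrt (z t b ω ⬝ᵥ z t b ω) ≤ 1)
    (hfmeas : ∀ t, Measurable[ℱ t] (f t))
    (hfbd : ∀ t ω, f t ω ∈ Set.Icc (-1 : ℝ) 1)
    (hξmeas : ∀ t, Measurable[ℱ (t + 1)] (ξ t))
    (hξbd : ∀ t ω, |ξ t ω| ≤ 1)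
    (hξcent : ∀ t, μ[ξ t | ℱ t] =ᵐ[μ] 0)
    -- the action and its conditional distribution
    (a : ℕ → Ω → A) (π : ℕ → Ω → A → ℝ)
    (hameas : ∀ t, Measurable[ℱ (t + 1)] (a t))
    (hπmeas : ∀ t b, Measurable[ℱ t] (fun ω => π t ω b))
    (hπprob : ∀ t ω, (∀ b, 0 ≤ π t ω b) ∧ (∑ b, π t ω b) = 1)
    (hπlaw : ∀ t b, μ[(fun ω => if a t ω = b then (1 : ℝ) else 0) | ℱ t]
      =ᵐ[μ] fun ω => π t ω b)
    (haξ : ∀ t, CondIndepFun (ℱ t) (ℱ.le t) (a t) (ξ t) μ)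
    -- rewards, mean features, and the orthogonalized estimator
    (r : ℕ → Ω → ℝ) (hr : ∀ t ω, r t ω = θ ⬝ᵥ z t (a t ω) ω + f t ω + ξ t ω)
    (mu : ℕ → Ω → (Fin d → ℝ)) (hmu : ∀ t ω, mu t ω = ∑ b, π t ω b • z t b ω)
    (Γ : ℕ → Ω → Matrix (Fin d) (Fin d) ℝ)
    (hΓ : ∀ t ω, Γ t ω = lam • (1 : Matrix (Fin d) (Fin d) ℝ) +
      ∑ τ ∈ Finset.range t,
        vecMulVec (z τ (a τ ω) ω - mu τ ω) (z τ (a τ ω) ω - mu τ ω))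
    (θhat : ℕ → Ω → (Fin d → ℝ))
    (hθhat : ∀ t ω, θhat t ω =
      (Γ t ω)⁻¹.mulVec (∑ τ ∈ Finset.range t, r τ ω • (z τ (a τ ω) ω - mu τ ω))) :
    ENNReal.ofReal (1 - δ) ≤
      μ {ω | ∀ t < T,
        Real.sqrt ((θhat t ω - θ) ⬝ᵥ (Γ t ω).mulVec (θhat t ω - θ)) ≤
          Real.sqrt lam +
            Real.sqrt (27 * d * Real.log (1 + 2 * T / d) + 54 * Real.log (4 * T / δ))} := by
  exact stmt_14_general μ ℱ hd δ lam hδ hδ1 hlamlb θ hθ z f ξ hzmeas hzbd hfmeas hfbd hξmeas hξbd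
    a π hameas hπmeas hπprob hπlaw haξ r hr mu hmu Γ hΓ θhat hθhat
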